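/- Let B be a separable stable C*-algebra and K a compact Hausdorff space. Then the C*-algebra C(K) ⊗ C(B) (continuous functions from K to the corona algebra of B) is K₁-injective and K₁-surjective: the natural map U(C(K)⊗C(B))/U₀(C(K)⊗C(B)) → K₁(C(K)⊗C(B)) is a bijection. -/

import Mathlib

open scoped MultiplierAlgebra

/-- The spectral projection `1_{≥0}(x)` of a self-adjoint element onto `[0, ∞)`,
obtained by applying the indicator function of `[0, ∞)` via the continuous
functional calculus. -/
noncomputable def posSpectralProj {C : Type*} [CStarAlgebra C] (x : C) : C :=
  cfc (fun t : ℝ => if 0 ≤ t then (1 : ℝ) else 0) x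

/-- `x ∈ 𝓜(ℂ, B)` belongs to (the canonical image of) the ideal `B` of its
multiplier algebra. -/
def inCanonicalIdeal {B : Type*} [NonUnitalCStarAlgebra B] (x : 𝓜(ℂ, B)) : Prop :=
  ∃ b : B, (b : 𝓜(ℂ, B)) = x

/-- Murray–von Neumann equivalence of projections. -/
def MvNEquiv {C : Type*} [Mul C] [Star C] (p q : C) : Prop :=
  ∃ v : C, star v * v = p ∧ v * star v = q

/-- `B` is a stable C*-algebra, encoded via the standard characterization (for σ-unital,
in particular separable, `B`): the multiplier algebra `𝓜(ℂ, B)` contains a sequence of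
isometries with pairwise orthogonal ranges whose range projections sum to `1` strictly. -/
def IsStable (B : Type*) [NonUnitalCStarAlgebra B] : Prop :=
  ∃ s : ℕ → 𝓜(ℂ, B),
    (∀ n, star (s n) * s n = 1) ∧
    (∀ m n, m ≠ n → star (s m) * s n = 0) ∧
    ∀ b : B, Filter.Tendsto
      (fun N : ℕ => (∑ n ∈ Finset.range N, s n * star (s n)) * (b : 𝓜(ℂ, B)))
      Filter.atTop (nhds (b : 𝓜(ℂ, B)))

section
open Filter Topology


/-- Sequential increasing approximate unit, written as partial sums of squares. -/
lemma aux_approx {B : Type*} [NonUnitalCStarAlgebra B] [TopologicalSpace.SeparableSpace B] :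
    ∃ d : ℕ → B, (∀ n, star (d n) = d n) ∧
      (∀ N, ‖∑ n ∈ Finset.range N, d n * d n‖ ≤ 1) ∧
      ∀ b, Tendsto (fun N => (∑ n ∈ Finset.range N, d n * d n) * b) atTop (𝓝 b) := by
  let _ : PartialOrder B := CStarAlgebra.spectralOrder B
  have : StarOrderedRing B := CStarAlgebra.spectralOrderedRing B
  have step : ∀ (N : ℕ) (e : B), ∃ f : B, (0 ≤ e ∧ ‖e‖ < 1) →
      (0 ≤ f ∧ ‖f‖ < 1) ∧ e ≤ f ∧ ∀ i ≤ N, ‖f * TopologicalSpace.denseSeq B i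
        - TopologicalSpace.denseSeq B i‖ < 1 / (N + 1 : ℝ) := by
    intro N e
    by_cases he : 0 ≤ e ∧ ‖e‖ < 1
    swap
    · exact ⟨0, fun h => absurd h he⟩
    have hb := CStarAlgebra.hasBasis_approximateUnit B
    have h1 : ∀ᶠ f in CStarAlgebra.approximateUnit B, e ≤ f :=
      hb.eventually_iff.2 ⟨e, he, fun y hy => hy.1⟩
    have h2 : ∀ᶠ f in CStarAlgebra.approximateUnit B, ∀ i ∈ Finset.range (N + 1),
        ‖f * TopologicalSpace.denseSeq B i
        - TopologicalSpace.denseSeq B i‖ < 1 / (N + 1 : ℝ) := by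
      rw [Filter.eventually_all_finset]
      intro i _
      have := (CStarAlgebra.increasingApproximateUnit B).tendsto_mul_right
        (TopologicalSpace.denseSeq B i)
      have := (Metric.tendsto_nhds.1 this) (1 / (N + 1 : ℝ)) (by positivity)
      simpa [dist_eq_norm] using this
    obtain ⟨x, hx, hx2⟩ := hb.eventually_iff.1 (h1.and h2)
    have := hx2 (x := x) ⟨le_refl x, by simpa using hx.2.le⟩
    exact ⟨x, fun _ => ⟨hx, this.1, fun i hi => this.2 i (by simpa [Nat.lt_succ_iff] using hi)⟩⟩
  choose f hf using step
  let e : ℕ → B := fun n => Nat.rec 0 (fun N x => f N x) n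
  have he : ∀ n, 0 ≤ e n ∧ ‖e n‖ < 1 := by
    intro n
    induction n with
    | zero => simp [e]
    | succ n ih => exact (hf n (e n) ih).1
  have hle : ∀ n, e n ≤ e (n + 1) := fun n => (hf n (e n) (he n)).2.1
  have hds : ∀ n i, i ≤ n → ‖e (n + 1) * TopologicalSpace.denseSeq B i
        - TopologicalSpace.denseSeq B i‖ < 1 / (n + 1 : ℝ) :=
    fun n i hi => (hf n (e n) (he n)).2.2 i hi
  have hsum : ∀ N, ∑ n ∈ Finset.range N, CFC.sqrt (e (n + 1) - e n) * CFC.sqrt (e (n + 1) - e n)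
      = e N := by
    intro N
    have : ∀ n, CFC.sqrt (e (n + 1) - e n) * CFC.sqrt (e (n + 1) - e n) = e (n + 1) - e n :=
      fun n => CFC.sqrt_mul_sqrt_self _ (sub_nonneg.2 (hle n))
    simp only [this, Finset.sum_range_sub]
    simp [e]
  refine ⟨fun n => CFC.sqrt (e (n + 1) - e n), fun n => ?_, fun N => ?_, fun b => ?_⟩
  · exact (IsSelfAdjoint.of_nonneg (CFC.sqrt_nonneg _)).star_eq
  · rw [hsum]; exact (he N).2.le
  · simp only [hsum]
    rw [Metric.tendsto_atTop]
    intro ε hε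
    obtain ⟨i, hi⟩ := (TopologicalSpace.denseRange_denseSeq B).exists_dist_lt b
      (show (0 : ℝ) < ε / 3 by positivity)
    obtain ⟨m, hm⟩ := exists_nat_one_div_lt (show (0 : ℝ) < ε / 3 by positivity)
    refine ⟨max i m + 1, fun n hn => ?_⟩
    obtain ⟨n, rfl⟩ : ∃ k, n = k + 1 := ⟨n - 1, by omega⟩
    set c := TopologicalSpace.denseSeq B i
    have h1 := hds n i (by omega)
    have h2 : (1 : ℝ) / (n + 1) ≤ 1 / (m + 1) := by
      apply one_div_le_one_div_of_le (by positivity)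
      have : m ≤ n := by omega
      exact_mod_cast Nat.succ_le_succ this
    rw [dist_eq_norm] at hi ⊢
    have h3 : e (n + 1) * b - b = e (n + 1) * (b - c) + (e (n + 1) * c - c) - (b - c) := by
      rw [mul_sub]; abel
    rw [h3]
    have h4 : ‖e (n + 1) * (b - c)‖ ≤ ‖b - c‖ :=
      (norm_mul_le _ _).trans (mul_le_of_le_one_left (norm_nonneg _) (he (n + 1)).2.le)
    have h5 := norm_sub_le (e (n + 1) * (b - c) + (e (n + 1) * c - c)) (b - c)
    have h6 := norm_add_le (e (n + 1) * (b - c)) (e (n + 1) * c - c)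
    linarith

lemma aux_lc {B : Type*} [NonUnitalCStarAlgebra B] {a b : B} (h : ∀ y, y * a = y * b) : a = b := by
  have h' : star (a - b) * (a - b) = 0 := by rw [mul_sub, h, sub_self]
  exact sub_eq_zero.1 (CStarRing.star_mul_self_eq_zero_iff _ |>.1 h')

lemma aux_rc {B : Type*} [NonUnitalCStarAlgebra B] {a b : B} (h : ∀ y, a * y = b * y) : a = b := by
  have h' : (a - b) * star (a - b) = 0 := by rw [sub_mul, h, sub_self]
  exact sub_eq_zero.1 (CStarRing.mul_star_self_eq_zero_iff _ |>.1 h')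

lemma aux_iso {B : Type*} [NonUnitalCStarAlgebra B] :
    Isometry (DoubleCentralizer.coeHom : B →⋆ₙₐ[ℂ] 𝓜(ℂ, B)) := by
  apply NonUnitalStarAlgHom.isometry
  intro a b hab
  refine aux_rc fun x => ?_
  have := congrArg (fun m : 𝓜(ℂ, B) => m.fst x) hab
  simpa using this

lemma aux_e1 {B : Type*} [NonUnitalCStarAlgebra B] (m : 𝓜(ℂ, B)) (b : B) :
    m * (b : 𝓜(ℂ, B)) = DoubleCentralizer.coeHom (𝕜 := ℂ) (m.fst b) := by
  refine DoubleCentralizer.ext _ _ _ _ (Prod.ext ?_ ?_)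
  · ext x
    refine aux_lc fun y => ?_
    have h1 := m.central y (b * x)
    have h2 := m.central y b
    change y * m.fst (b * x) = y * (m.fst b * x)
    rw [← h1, ← mul_assoc, h2, mul_assoc]
  · ext x
    exact m.central x b

lemma aux_e2 {B : Type*} [NonUnitalCStarAlgebra B] (m : 𝓜(ℂ, B)) (b : B) :
    (b : 𝓜(ℂ, B)) * m = DoubleCentralizer.coeHom (𝕜 := ℂ) (m.snd b) := by
  refine DoubleCentralizer.ext _ _ _ _ (Prod.ext ?_ ?_)
  · ext x
    exact (m.central b x).symm
  · ext x
    refine aux_rc fun y => ?_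
    have h1 := m.central (x * b) y
    have h2 := m.central b y
    change m.snd (x * b) * y = (x * m.snd b) * y
    rw [h1, mul_assoc, ← h2, mul_assoc]

/-- Strict completeness of the multiplier algebra. -/
lemma aux_complete {B : Type*} [NonUnitalCStarAlgebra B] (T : ℕ → 𝓜(ℂ, B))
    (h1 : ∀ b : B, CauchySeq fun N => T N * (b : 𝓜(ℂ, B)))
    (h2 : ∀ b : B, CauchySeq fun N => (b : 𝓜(ℂ, B)) * T N) :
    ∃ t : 𝓜(ℂ, B), ∀ b : B, Tendsto (fun N => T N * (b : 𝓜(ℂ, B))) atTop (𝓝 (t * b)) ∧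
      Tendsto (fun N => (b : 𝓜(ℂ, B)) * T N) atTop (𝓝 (b * t)) := by
  have hiso := aux_iso (B := B)
  have c1 : ∀ b : B, ∃ l, Tendsto (fun N => (T N).fst b) atTop (𝓝 l) := fun b => by
    apply cauchySeq_tendsto_of_complete
    have := h1 b
    simp only [aux_e1] at this
    rw [Metric.cauchySeq_iff] at this ⊢
    simpa only [hiso.dist_eq] using this
  have c2 : ∀ b : B, ∃ l, Tendsto (fun N => (T N).snd b) atTop (𝓝 l) := fun b => by
    apply cauchySeq_tendsto_of_complete
    have := h2 b
    simp only [aux_e2] at this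
    rw [Metric.cauchySeq_iff] at this ⊢
    simpa only [hiso.dist_eq] using this
  choose f hf using c1
  choose g hg using c2
  let F : B →L[ℂ] B := continuousLinearMapOfTendsto (fun N => (T N).fst) (tendsto_pi_nhds.2 hf)
  let G : B →L[ℂ] B := continuousLinearMapOfTendsto (fun N => (T N).snd) (tendsto_pi_nhds.2 hg)
  have hF : ∀ b, F b = f b := fun b => rfl
  have hG : ∀ b, G b = g b := fun b => rfl
  let t : 𝓜(ℂ, B) := 
    { fst := F, snd := G, central := fun x y => by
        rw [hF, hG]
        have a1 := (hg x).mul_const y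
        have a2 := (hf y).const_mul x
        refine tendsto_nhds_unique a1 (a2.congr fun N => ((T N).central x y).symm) }
  refine ⟨t, fun b => ⟨?_, ?_⟩⟩
  · simp only [aux_e1]
    exact (hiso.continuous.tendsto _).comp (hf b)
  · simp only [aux_e2]
    exact (hiso.continuous.tendsto _).comp (hg b)

/-- Essentiality. -/
lemma aux_ess {B : Type*} [NonUnitalCStarAlgebra B] (x : 𝓜(ℂ, B))
    (h : ∀ a b : B, (a : 𝓜(ℂ, B)) * x * (b : 𝓜(ℂ, B)) = 0) : x = 0 := by
  have h1 : ∀ a b : B, a * x.fst b = 0 := by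
    intro a b
    apply (aux_iso (B := B)).injective
    rw [map_mul, ← aux_e1, map_zero, ← mul_assoc]
    exact h a b
  refine DoubleCentralizer.ext _ _ _ _ (Prod.ext ?_ ?_)
  · ext b
    exact aux_lc fun y => by simpa using h1 y b
  · ext a
    refine aux_rc fun y => ?_
    have := x.central a y
    rw [h1] at this
    simpa using this


/-- Strictly convergent sums `∑ s (k n) * d n`. -/
lemma core_one {M Q : Type*} [CStarAlgebra M] [CStarAlgebra Q] (π : M →⋆ₐ[ℂ] Q)
    (hcomplete : ∀ T : ℕ → M, (∀ b, π b = 0 → CauchySeq fun N => T N * b) →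
      (∀ b, π b = 0 → CauchySeq fun N => b * T N) →
      ∃ t, ∀ b, π b = 0 → Tendsto (fun N => T N * b) atTop (𝓝 (t * b)) ∧
        Tendsto (fun N => b * T N) atTop (𝓝 (b * t)))
    (hess : ∀ x, (∀ a b, π a = 0 → π b = 0 → a * x * b = 0) → x = 0)
    (d : ℕ → M) (hds : ∀ n, star (d n) = d n)
    (hd1 : ∀ N, ‖∑ n ∈ Finset.range N, d n * d n‖ ≤ 1)
    (hd : ∀ b, π b = 0 → Tendsto (fun N => (∑ n ∈ Finset.range N, d n * d n) * b) atTop (𝓝 b))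
    (s : ℕ → M) (hs1 : ∀ n, star (s n) * s n = 1) (hs2 : ∀ m n, m ≠ n → star (s m) * s n = 0)
    (hs : ∀ b, π b = 0 → Tendsto (fun N => (∑ n ∈ Finset.range N, s n * star (s n)) * b)
      atTop (𝓝 b))
    (k : ℕ → ℕ) (hk : StrictMono k) :
    ∃ t, star t * t = 1 ∧ ∀ b, π b = 0 →
      Tendsto (fun N => (∑ n ∈ Finset.range N, s (k n) * d n) * b) atTop (𝓝 (t * b)) ∧
      Tendsto (fun N => b * (∑ n ∈ Finset.range N, s (k n) * d n)) atTop (𝓝 (b * t)) := by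
  set e : ℕ → M := fun N => ∑ n ∈ Finset.range N, d n * d n with he
  set T : ℕ → M := fun N => ∑ n ∈ Finset.range N, s (k n) * d n with hT
  have hss : ∀ m n, star (s (k m)) * s (k n) = if m = n then 1 else 0 := by
    intro m n
    split_ifs with h
    · rw [h, hs1]
    · exact hs2 _ _ fun h' => h (hk.injective h')
  have hTT : ∀ N K, star (T N) * T K = e (min N K) := by
    intro N K
    simp only [hT, he, star_sum, star_mul, Finset.sum_mul_sum, hds]
    have : ∀ i j, d i * star (s (k i)) * (s (k j) * d j) = if i = j then d i * d j else 0 := by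
      intro i j
      rw [mul_assoc, ← mul_assoc (star _), hss]
      split_ifs <;> simp
    simp only [this, Finset.sum_ite_eq, ← Finset.sum_filter]
    congr 1
    ext i
    simp
  have hes : ∀ N, star (e N) = e N := by
    intro N
    simp [he, star_sum, hds]
  have hTd : ∀ N K, K ≤ N → star (T N - T K) * (T N - T K) = e N - e K := by
    intro N K h
    rw [star_sub, sub_mul, mul_sub, mul_sub, hTT, hTT, hTT, hTT]
    simp [h]
  have hTn : ∀ N, ‖T N‖ ≤ 1 := by
    intro N
    have h1 : ‖T N‖ * ‖T N‖ = ‖e N‖ := by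
      rw [← CStarRing.norm_star_mul_self, hTT, min_self]
    have h2 := hd1 N
    nlinarith [norm_nonneg (T N)]
  have hc1 : ∀ b, π b = 0 → CauchySeq fun N => T N * b := by
    intro b hb
    have hcau := (hd b hb).cauchySeq
    rw [Metric.cauchySeq_iff'] at hcau ⊢
    intro ε hε
    obtain ⟨K, hK⟩ := hcau (ε ^ 2 / (‖b‖ + 1)) (by positivity)
    refine ⟨K, fun N hN => ?_⟩
    have h1 := hK N hN
    rw [dist_eq_norm] at h1 ⊢
    have h2 : ‖T N * b - T K * b‖ * ‖T N * b - T K * b‖ ≤ ‖b‖ * ‖e N * b - e K * b‖ := by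
      rw [← CStarRing.norm_star_mul_self]
      have : star (T N * b - T K * b) * (T N * b - T K * b) = star b * (e N * b - e K * b) := by
        rw [← sub_mul, ← sub_mul, star_mul, mul_assoc, ← mul_assoc (star (T N - T K)), hTd N K hN]
      rw [this]
      exact (norm_mul_le _ _).trans (by rw [norm_star])
    have h3 : (‖b‖ + 1) * ‖e N * b - e K * b‖ < ε ^ 2 := by
      rw [lt_div_iff₀ (by positivity)] at h1
      linarith
    have h4 := norm_nonneg (e N * b - e K * b)
    exact lt_of_pow_lt_pow_left₀ 2 hε.le (by nlinarith)
  have hc2 : ∀ b, π b = 0 → CauchySeq fun N => b * T N := by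
    intro b hb
    have h0 : Tendsto (fun N => b * (∑ n ∈ Finset.range N, s n * star (s n))) atTop (𝓝 b) := by
      have := (hs (star b) (by simp [map_star, hb])).star
      simpa [star_sum, star_mul] using this
    rw [Metric.cauchySeq_iff']
    intro ε hε
    obtain ⟨L, hL⟩ := (Metric.tendsto_atTop.1 h0) (ε / 2) (by positivity)
    have hL := hL L le_rfl
    rw [dist_eq_norm] at hL
    set P := ∑ n ∈ Finset.range L, s n * star (s n)
    refine ⟨L, fun N hN => ?_⟩
    have hP : P * (T N - T L) = 0 := by
      have hTT' : T N - T L = ∑ n ∈ Finset.Ico L N, s (k n) * d n := by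
        rw [Finset.sum_Ico_eq_sub _ hN]
      rw [hTT', Finset.sum_mul_sum]
      refine Finset.sum_eq_zero fun i hi => Finset.sum_eq_zero fun j hj => ?_
      rw [mul_assoc, ← mul_assoc (star (s i)), hs2, zero_mul, mul_zero]
      have := hk.id_le j
      simp at hi hj this
      omega
    rw [dist_eq_norm]
    have : b * T N - b * T L = (b - b * P) * (T N - T L) := by
      rw [sub_mul, mul_assoc b P, hP, mul_zero, sub_zero, mul_sub]
    rw [this]
    have h3 : ‖T N - T L‖ ≤ 2 := (norm_sub_le _ _).trans (by linarith [hTn N, hTn L])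
    rw [norm_sub_rev] at hL
    calc _ ≤ ‖b - b * P‖ * ‖T N - T L‖ := norm_mul_le _ _
      _ ≤ ‖b - b * P‖ * 2 := by gcongr
      _ < ε := by linarith
  obtain ⟨t, ht⟩ := hcomplete T hc1 hc2
  refine ⟨t, ?_, ht⟩
  rw [← sub_eq_zero]
  apply hess
  intro a b ha hb
  have h1 : Tendsto (fun N => (a * star (T N)) * (T N * b)) atTop (𝓝 ((a * star t) * (t * b))) := by
    refine Tendsto.mul ?_ (ht b hb).1
    have := (ht (star a) (by simp [map_star, ha])).1.star
    simpa [star_mul] using this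
  have h2 : Tendsto (fun N => (a * star (T N)) * (T N * b)) atTop (𝓝 (a * b)) := by
    refine ((hd b hb).const_mul a).congr fun N => ?_
    rw [mul_assoc, ← mul_assoc (star (T N)), hTT, min_self]
  have h3 := tendsto_nhds_unique h1 h2
  rw [mul_sub, sub_mul, mul_one, ← h3]
  simp [mul_assoc]

lemma core_two {M Q : Type*} [CStarAlgebra M] [CStarAlgebra Q] (π : M →⋆ₐ[ℂ] Q)
    (hcomplete : ∀ T : ℕ → M, (∀ b, π b = 0 → CauchySeq fun N => T N * b) →
      (∀ b, π b = 0 → CauchySeq fun N => b * T N) →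
      ∃ t, ∀ b, π b = 0 → Tendsto (fun N => T N * b) atTop (𝓝 (t * b)) ∧
        Tendsto (fun N => b * T N) atTop (𝓝 (b * t)))
    (hess : ∀ x, (∀ a b, π a = 0 → π b = 0 → a * x * b = 0) → x = 0)
    (d : ℕ → M) (hdπ : ∀ n, π (d n) = 0) (hds : ∀ n, star (d n) = d n)
    (hd1 : ∀ N, ‖∑ n ∈ Finset.range N, d n * d n‖ ≤ 1)
    (hd : ∀ b, π b = 0 → Tendsto (fun N => (∑ n ∈ Finset.range N, d n * d n) * b) atTop (𝓝 b))
    (s : ℕ → M) (hs1 : ∀ n, star (s n) * s n = 1) (hs2 : ∀ m n, m ≠ n → star (s m) * s n = 0)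
    (hs : ∀ b, π b = 0 → Tendsto (fun N => (∑ n ∈ Finset.range N, s n * star (s n)) * b)
      atTop (𝓝 b))
    (X : ℕ → M) :
    ∃ S T, star S * S = 1 ∧ star T * T = 1 ∧ star S * T = 0 ∧ ∀ q, π (star S * X q * T) = 0 := by
  -- `s l ^* b → 0`
  have hz : ∀ b, π b = 0 → Tendsto (fun l => star (s l) * b) atTop (𝓝 0) := by
    intro b hb
    have h1 := hs b hb
    have h2 := (tendsto_add_atTop_iff_nat 1).2 h1
    have h3 := h2.sub h1
    rw [sub_self] at h3
    have h4 := h3.norm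
    rw [norm_zero] at h4
    rw [tendsto_zero_iff_norm_tendsto_zero]
    refine squeeze_zero (fun _ => norm_nonneg _) (fun l => ?_) h4
    rw [Finset.sum_range_succ, add_mul, add_sub_cancel_left]
    have h5 : star (s l) * b = star (s l) * (s l * star (s l) * b) := by
      rw [mul_assoc (s l), ← mul_assoc (star (s l)), hs1, one_mul]
    have h6 : ‖star (s l)‖ ≤ 1 := by
      have : ‖s l‖ * ‖s l‖ = ‖(1 : M)‖ := by rw [← CStarRing.norm_star_mul_self, hs1]
      have h7 : ‖(1 : M)‖ ≤ 1 := by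
        rcases subsingleton_or_nontrivial M with h | h
        · rw [Subsingleton.elim (1 : M) 0]; simp
        · simp
      rw [norm_star]
      nlinarith [norm_nonneg (s l)]
    calc ‖star (s l) * b‖ = ‖star (s l) * (s l * star (s l) * b)‖ := by rw [← h5]
      _ ≤ ‖star (s l)‖ * ‖s l * star (s l) * b‖ := norm_mul_le _ _
      _ ≤ _ := mul_le_of_le_one_left (norm_nonneg _) h6
  have hz' : ∀ b, π b = 0 → Tendsto (fun l => b * s l) atTop (𝓝 0) := by
    intro b hb
    have := (hz (star b) (by simp [map_star, hb])).star
    simpa [star_mul] using this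
  have step : ∀ (N : ℕ) (T S : M) (c : ℕ), ∃ l k : ℕ, π T = 0 → π S = 0 →
      c < l ∧ l < k ∧ (∀ q ≤ N, ‖d N * (star (s l) * (X q * T))‖ ≤ (1 / 2) ^ N) ∧
      (∀ q ≤ N, ‖star (S + s l * d N) * X q * s k * d N‖ ≤ (1 / 2) ^ N) := by
    intro N T S c
    by_cases h : π T = 0 ∧ π S = 0
    swap
    · exact ⟨0, 0, fun h1 h2 => absurd ⟨h1, h2⟩ h⟩
    obtain ⟨hT, hS⟩ := h
    have h1 : ∀ᶠ l in atTop, ∀ q ∈ Finset.range (N + 1),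
        ‖d N * (star (s l) * (X q * T))‖ ≤ (1 / 2) ^ N := by
      rw [Filter.eventually_all_finset]
      intro q _
      have := ((hz (X q * T) (by simp [hT])).const_mul (d N)).norm
      rw [mul_zero, norm_zero] at this
      exact this.eventually_le_const (by positivity)
    obtain ⟨l, hl, hcl⟩ := (h1.and (eventually_gt_atTop c)).exists
    have h2 : ∀ᶠ k in atTop, ∀ q ∈ Finset.range (N + 1),
        ‖star (S + s l * d N) * X q * s k * d N‖ ≤ (1 / 2) ^ N := by
      rw [Filter.eventually_all_finset]
      intro q _
      have := ((hz' (star (S + s l * d N) * X q)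
        (by simp [map_star, hS, hdπ])).mul_const (d N)).norm
      rw [zero_mul, norm_zero] at this
      exact this.eventually_le_const (by positivity)
    obtain ⟨k, hk, hlk⟩ := (h2.and (eventually_gt_atTop l)).exists
    exact ⟨l, k, fun _ _ => ⟨hcl, hlk, fun q hq => hl q (by simpa [Nat.lt_succ_iff] using hq),
      fun q hq => hk q (by simpa [Nat.lt_succ_iff] using hq)⟩⟩
  choose l k hlk using step
  let st : ℕ → M × M × ℕ := fun n => Nat.rec (0, 0, 0) (fun N p =>
    (p.1 + s (k N p.1 p.2.1 p.2.2) * d N, p.2.1 + s (l N p.1 p.2.1 p.2.2) * d N,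
      k N p.1 p.2.1 p.2.2)) n
  let kk : ℕ → ℕ := fun N => k N (st N).1 (st N).2.1 (st N).2.2
  let ll : ℕ → ℕ := fun N => l N (st N).1 (st N).2.1 (st N).2.2
  set T : ℕ → M := fun N => ∑ n ∈ Finset.range N, s (kk n) * d n with hT
  set S : ℕ → M := fun N => ∑ n ∈ Finset.range N, s (ll n) * d n with hS
  have hT1 : ∀ N, (st N).1 = T N := by
    intro N
    induction N with
    | zero => simp [st, T]
    | succ N ih =>
      have : (st (N + 1)).1 = (st N).1 + s (kk N) * d N := rfl
      rw [this, ih]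
      simp [T, Finset.sum_range_succ]
  have hS1 : ∀ N, (st N).2.1 = S N := by
    intro N
    induction N with
    | zero => simp [st, S]
    | succ N ih =>
      have : (st (N + 1)).2.1 = (st N).2.1 + s (ll N) * d N := rfl
      rw [this, ih]
      simp [S, Finset.sum_range_succ]
  have hTπ : ∀ N, π (T N) = 0 := fun N => by simp [T, hdπ]
  have hSπ : ∀ N, π (S N) = 0 := fun N => by simp [S, hdπ]
  have hprop := fun N => hlk N (st N).1 (st N).2.1 (st N).2.2 (by rw [hT1, hTπ]) (by rw [hS1, hSπ])
  have hlt1 : ∀ N, ll N < kk N := fun N => (hprop N).2.1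
  have hlt2 : ∀ N, kk N < ll (N + 1) := fun N => (hprop (N + 1)).1
  have hb1 : ∀ N, ∀ q ≤ N, ‖d N * (star (s (ll N)) * (X q * T N))‖ ≤ (1 / 2) ^ N := by
    intro N
    rw [← hT1]
    exact (hprop N).2.2.1
  have hb2 : ∀ N, ∀ q ≤ N, ‖star (S N + s (ll N) * d N) * X q * s (kk N) * d N‖ ≤ (1 / 2) ^ N := by
    intro N
    rw [← hS1]
    exact (hprop N).2.2.2
  clear_value kk ll
  have hkm : StrictMono kk := strictMono_nat_of_lt_succ fun n => (hlt2 n).trans (hlt1 _)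
  have hlm : StrictMono ll := strictMono_nat_of_lt_succ fun n => (hlt1 n).trans (hlt2 _)
  have hne : ∀ m n, ll m ≠ kk n := by
    intro m n
    rcases le_or_gt m n with h | h
    · exact ((hlm.monotone h).trans_lt (hlt1 n)).ne
    · exact ((hlt2 n).trans_le (hlm.monotone h)).ne'
  obtain ⟨t, ht1, ht⟩ := core_one π hcomplete hess d hds hd1 hd s hs1 hs2 hs kk hkm
  obtain ⟨r, hr1, hr⟩ := core_one π hcomplete hess d hds hd1 hd s hs1 hs2 hs ll hlm
  have hlim : ∀ x a b, π a = 0 → π b = 0 →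
      Tendsto (fun N => a * (star (S N) * x * T N) * b) atTop (𝓝 (a * (star r * x * t) * b)) := by
    intro x a b ha hb
    have h1 : Tendsto (fun N => (a * star (S N)) * x * (T N * b)) atTop
        (𝓝 ((a * star r) * x * (t * b))) := by
      refine Tendsto.mul (Tendsto.mul_const _ ?_) (ht b hb).1
      have := (hr (star a) (by simp [map_star, ha])).1.star
      simp only [star_mul, star_star] at this
      exact this
    simpa only [mul_assoc] using h1
  refine ⟨r, t, hr1, ht1, ?_, fun q => ?_⟩
  · apply hess
    intro a b ha hb
    have h1 := hlim 1 a b ha hb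
    have h2 : ∀ N, star (S N) * T N = 0 := by
      intro N
      simp only [hS, hT, star_sum, star_mul, Finset.sum_mul_sum]
      refine Finset.sum_eq_zero fun i _ => Finset.sum_eq_zero fun j _ => ?_
      rw [mul_assoc, ← mul_assoc (star (s (ll i))), hs2 _ _ (hne i j), zero_mul, mul_zero]
    simp only [mul_one, h2, mul_zero, zero_mul] at h1
    exact (tendsto_nhds_unique h1 tendsto_const_nhds)
  · set G : ℕ → M := fun N => star (S N) * X q * T N with hG
    have hGd : ∀ N, q ≤ N → ‖G N - G (N + 1)‖ ≤ 2 * (1 / 2) ^ N := by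
      intro N hN
      have hTs : T (N + 1) = T N + s (kk N) * d N := by simp [T, Finset.sum_range_succ]
      have hSs : S (N + 1) = S N + s (ll N) * d N := by simp [S, Finset.sum_range_succ]
      have h1 := hb1 N q hN
      have h2 := hb2 N q hN
      have : G N - G (N + 1) = - (d N * (star (s (ll N)) * (X q * T N)) +
          star (S N + s (ll N) * d N) * X q * s (kk N) * d N) := by
        simp only [hG, hTs, hSs, star_add, star_mul, hds]
        noncomm_ring
      rw [this, norm_neg]
      refine (norm_add_le _ _).trans (by linarith)
    have hcau : CauchySeq fun N => G (N + q) := by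
      refine cauchySeq_of_le_geometric (1 / 2) 2 (by norm_num) fun n => ?_
      rw [dist_eq_norm]
      have h1 := hGd (n + q) (by omega)
      have h2 : (1 / 2 : ℝ) ^ (n + q) ≤ (1 / 2) ^ n :=
        pow_le_pow_of_le_one (by norm_num) (by norm_num) (by omega)
      rw [show n + 1 + q = n + q + 1 by ring]
      linarith
    obtain ⟨g, hg⟩ := cauchySeq_tendsto_of_complete hcau
    have hπc : Continuous π :=
      AddMonoidHomClass.continuous_of_bound π 1 fun a => by
        simpa using NonUnitalStarAlgHom.norm_apply_le π a
    have hgπ : π g = 0 := by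
      have h1 := (hπc.tendsto g).comp hg
      refine tendsto_nhds_unique h1 (tendsto_const_nhds.congr fun N => ?_)
      simp [G, hTπ]
    have : star r * X q * t = g := by
      rw [← sub_eq_zero]
      apply hess
      intro a b ha hb
      have h1 := (tendsto_add_atTop_iff_nat q).2 (hlim (X q) a b ha hb)
      have h2 := (hg.const_mul a).mul_const b
      rw [mul_sub, sub_mul, sub_eq_zero]
      exact tendsto_nhds_unique h1 h2
    rw [this, hgπ]


section
set_option linter.unusedSectionVars false
variable {A : Type*} [Ring A] [StarRing A] [Algebra ℂ A] [StarModule ℂ A] [TopologicalSpace A]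
  [IsTopologicalRing A] [ContinuousSMul ℂ A]

/-- A self-adjoint unitary is connected to `1`. -/
lemma join_sa (w : A) (h1 : star w = w) (h2 : w * w = 1) :
    JoinedIn (unitary A : Set A) w 1 := by
  let c : ℝ → ℂ := fun t => Complex.exp (Real.pi * t * Complex.I)
  have hc : ∀ t, star (c t) * c t = 1 := by
    intro t
    simp only [c, Complex.star_def, ← Complex.exp_conj, ← Complex.exp_add]
    simp
  have hc' : ∀ t, c t * star (c t) = 1 := fun t => by rw [mul_comm, hc]
  let F : ℝ → A := fun t => ((1 + c (1 - t)) / 2) • (1 : A) + ((1 - c (1 - t)) / 2) • w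
  have hF : Continuous F := by fun_prop
  have e2 : star (2 : ℂ) = 2 := by simp
  have key : ∀ z : ℂ, star z * z = 1 → 
      (((1 + z) / 2) • (1 : A) + ((1 - z) / 2) • w) ∈ unitary A := by
    intro z hz
    have hz' : z * star z = 1 := by rw [mul_comm, hz]
    rw [Unitary.mem_iff]
    simp only [star_add, star_smul, h1, star_one, star_div₀, star_sub, e2, add_mul, mul_add,
      smul_mul_smul_comm, one_mul, mul_one, h2]
    constructor
    · have : ∀ a b c d : ℂ, a + d = 1 → b + c = 0 → (a • (1 : A) + b • w) + (c • w + d • (1 : A)) = 1 := by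
        intro a b c d h h'
        rw [show (a • (1 : A) + b • w) + (c • w + d • (1 : A)) = (a + d) • (1 : A) + (b + c) • w by
          module, h, h']
        simp
      first
      | (apply this <;> linear_combination (1 / 2 : ℂ) * hz)
      | (apply this
         · linear_combination (1 / 2 : ℂ) * hz
         · linear_combination (-1 / 2 : ℂ) * hz)
    · have h3 : ((1 + z) / 2 * ((1 + star z) / 2) + (1 - z) / 2 * ((1 - star z) / 2)) • (1 : A) +
        ((1 + z) / 2 * ((1 - star z) / 2) + (1 - z) / 2 * ((1 + star z) / 2)) • w = 1 := by
        rw [show ((1 + z) / 2 * ((1 + star z) / 2) + (1 - z) / 2 * ((1 - star z) / 2)) = 1 by linear_combination (1 / 2 : ℂ) * hz',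
          show ((1 + z) / 2 * ((1 - star z) / 2) + (1 - z) / 2 * ((1 + star z) / 2)) = 0 by linear_combination (-1 / 2 : ℂ) * hz']
        simp
      conv_rhs => rw [← h3]
      module
  refine JoinedIn.ofLine (f := F) hF.continuousOn ?_ ?_ ?_
  · simp [F, c]
  · simp [F, c]
  · rintro _ ⟨t, -, rfl⟩
    exact key _ (hc _)

lemma join_mul {a b c d : A} (h : JoinedIn (unitary A : Set A) a b)
    (h' : JoinedIn (unitary A : Set A) c d) : JoinedIn (unitary A : Set A) (a * c) (b * d) := by
  obtain ⟨p, hp⟩ := h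
  obtain ⟨q, hq⟩ := h'
  exact ⟨p.mul q, fun t => mul_mem (hp t) (hq t)⟩

/-- The self-adjoint unitary exchanging the domain and range of a partial isometry. -/
lemma swap_sa (v p q : A) (hp : star v * v = p) (hq : v * star v = q) (hvp : v * p = v)
    (hpq : p * q = 0) :
    star (v + star v + (1 - p - q)) = v + star v + (1 - p - q) ∧
    (v + star v + (1 - p - q)) * (v + star v + (1 - p - q)) = 1 := by
  have hsp : star p = p := by rw [← hp]; simp
  have hsq : star q = q := by rw [← hq]; simp
  have hqp : q * p = 0 := by rw [← hsp, ← hsq, ← star_mul, hpq, star_zero]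
  have hqv : q * v = v := by rw [← hq, mul_assoc, hp, hvp]
  have hpp : p * p = p := by conv_lhs => rw [← hp, mul_assoc, hp, hvp]
                             rw [hp]
  have hqq : q * q = q := by conv_lhs => rw [← hq, ← mul_assoc, hq, hqv]
                             rw [hq]
  have hpv : p * v = 0 := by rw [← hqv, ← mul_assoc, hpq, zero_mul]
  have hvv : v * v = 0 := by
    nth_rewrite 1 [← hvp]
    rw [mul_assoc, hpv, mul_zero]
  have hvq : v * q = 0 := by rw [← hvp, mul_assoc, hpq, mul_zero]
  have s1 : star v * p = 0 := by rw [← hsp, ← star_mul, hpv, star_zero]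
  have s2 : p * star v = star v := by conv_lhs => rw [← hsp, ← star_mul, hvp]
  have s3 : star v * q = star v := by conv_lhs => rw [← hsq, ← star_mul, hqv]
  have s4 : q * star v = 0 := by rw [← hsq, ← star_mul, hvq, star_zero]
  have s5 : star v * star v = 0 := by rw [← star_mul, hvv, star_zero]
  constructor
  · simp [hsp, hsq]; abel
  · simp only [mul_add, add_mul, mul_sub, sub_mul, hvv, hp, hq, hvp, hpq, hqp, hqv, hpp, hqq, hpv,
      hvq, s1, s2, s3, s4, s5, one_mul, mul_one]
    abel

/-- If `s, t` are isometries with orthogonal ranges, some unitary in the component of `1`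
sends `s` to `t`. -/
lemma swap_iso (s t : A) (hs : star s * s = 1) (ht : star t * t = 1) (hst : star s * t = 0) :
    ∃ z : A, JoinedIn (unitary A : Set A) z 1 ∧ z * s = t := by
  have hts : star t * s = 0 := by rw [← star_star s, ← star_mul, hst, star_zero]
  obtain ⟨h1, h2⟩ := swap_sa (t * star s) (s * star s) (t * star t)
    (by rw [star_mul, star_star, mul_assoc, ← mul_assoc (star t), ht, one_mul])
    (by rw [star_mul, star_star, mul_assoc, ← mul_assoc (star s), hs, one_mul])
    (by rw [mul_assoc, ← mul_assoc (star s), hs, one_mul])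
    (by rw [mul_assoc, ← mul_assoc (star s), hst, zero_mul, mul_zero])
  refine ⟨_, join_sa _ h1 h2, ?_⟩
  simp only [star_mul, star_star, add_mul, sub_mul, mul_assoc, hs, hts]
  simp

open Matrix in
lemma conj_unitary {ι κ : Type*} [Fintype ι] [Fintype κ] [DecidableEq ι] [DecidableEq κ]
    (R : Matrix ι κ A) (hR : Rᴴ * R = 1) (x : Matrix κ κ A) (hx : x ∈ unitary (Matrix κ κ A)) :
    R * x * Rᴴ + (1 - R * Rᴴ) ∈ unitary (Matrix ι ι A) := by
  have hR' : ∀ (y : Matrix κ ι A), Rᴴ * (R * y) = y := fun y => by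
    rw [← Matrix.mul_assoc, hR, Matrix.one_mul]
  have key : ∀ y z : Matrix κ κ A, y * z = 1 →
      (R * y * Rᴴ + (1 - R * Rᴴ)) * (R * z * Rᴴ + (1 - R * Rᴴ)) = 1 := by
    intro y z h
    have h' : ∀ (t : Matrix κ ι A), y * (z * t) = t := fun t => by
      rw [← Matrix.mul_assoc, h, Matrix.one_mul]
    simp only [Matrix.mul_add, Matrix.add_mul, Matrix.mul_sub, Matrix.sub_mul, Matrix.mul_assoc,
      Matrix.one_mul, Matrix.mul_one, hR', h']
    abel
  have hst : star (R * x * Rᴴ + (1 - R * Rᴴ)) = R * star x * Rᴴ + (1 - R * Rᴴ) := by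
    simp [Matrix.star_eq_conjTranspose, Matrix.conjTranspose_mul, Matrix.mul_assoc]
  rw [Unitary.mem_iff, hst]
  exact ⟨key _ _ (Unitary.mem_iff.1 hx).1, key _ _ (Unitary.mem_iff.1 hx).2⟩

open Matrix in
lemma join_block {ι κ : Type*} [Fintype ι] [Fintype κ] [DecidableEq ι] [DecidableEq κ]
    (R : Matrix ι κ A) (hR : Rᴴ * R = 1) (w : Matrix κ κ A) (hw : w ∈ unitary (Matrix κ κ A)) :
    JoinedIn (unitary (Matrix (κ ⊕ ι) (κ ⊕ ι) A) : Set (Matrix (κ ⊕ ι) (κ ⊕ ι) A))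
      (Matrix.fromBlocks 1 0 0 (R * w * Rᴴ + (1 - R * Rᴴ))) (Matrix.fromBlocks w 0 0 1) := by
  have hR' : ∀ (y : Matrix κ ι A), Rᴴ * (R * y) = y := fun y => by
    rw [← Matrix.mul_assoc, hR, Matrix.one_mul]
  set Y : Matrix (κ ⊕ ι) (κ ⊕ ι) A := Matrix.fromBlocks 0 Rᴴ R (1 - R * Rᴴ) with hY
  have h1 : star Y = Y := by
    simp [hY, Matrix.star_eq_conjTranspose, Matrix.fromBlocks_conjTranspose]
  have h2 : Y * Y = 1 := by
    rw [hY, Matrix.fromBlocks_multiply, ← Matrix.fromBlocks_one]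
    congr 1 <;> simp [Matrix.mul_sub, Matrix.sub_mul, Matrix.mul_assoc, hR, hR']
  have hj := join_sa Y h1 h2
  have hwu : Matrix.fromBlocks w 0 0 1 ∈ unitary (Matrix (κ ⊕ ι) (κ ⊕ ι) A) := by
    have h3 := Unitary.mem_iff.1 hw
    rw [Matrix.star_eq_conjTranspose] at h3
    rw [Unitary.mem_iff, Matrix.star_eq_conjTranspose]
    simp [Matrix.fromBlocks_conjTranspose, Matrix.fromBlocks_multiply, h3.1, h3.2]
  have := join_mul (join_mul hj (JoinedIn.refl hwu)) hj
  rw [one_mul, mul_one] at this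
  convert this using 1
  rw [hY, Matrix.fromBlocks_multiply, Matrix.fromBlocks_multiply]
  congr 1 <;> simp [Matrix.mul_sub, Matrix.sub_mul, Matrix.mul_assoc, hR, hR']

open Matrix in
lemma join_block' {ι κ : Type*} [Fintype ι] [Fintype κ] [DecidableEq ι] [DecidableEq κ]
    (R : Matrix ι κ A) (hR : Rᴴ * R = 1) (w : Matrix κ κ A) (hw : w ∈ unitary (Matrix κ κ A)) :
    JoinedIn (unitary (Matrix (ι ⊕ κ) (ι ⊕ κ) A) : Set (Matrix (ι ⊕ κ) (ι ⊕ κ) A))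
      (Matrix.fromBlocks (R * w * Rᴴ + (1 - R * Rᴴ)) 0 0 1) (Matrix.fromBlocks 1 0 0 w) := by
  have hR' : ∀ (y : Matrix κ ι A), Rᴴ * (R * y) = y := fun y => by
    rw [← Matrix.mul_assoc, hR, Matrix.one_mul]
  set Y : Matrix (ι ⊕ κ) (ι ⊕ κ) A := Matrix.fromBlocks (1 - R * Rᴴ) R Rᴴ 0 with hY
  have h1 : star Y = Y := by
    simp [hY, Matrix.star_eq_conjTranspose, Matrix.fromBlocks_conjTranspose]
  have h2 : Y * Y = 1 := by
    rw [hY, Matrix.fromBlocks_multiply, ← Matrix.fromBlocks_one]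
    congr 1 <;> simp [Matrix.mul_sub, Matrix.sub_mul, Matrix.mul_assoc, hR, hR']
  have hj := join_sa Y h1 h2
  have hwu : Matrix.fromBlocks 1 0 0 w ∈ unitary (Matrix (ι ⊕ κ) (ι ⊕ κ) A) := by
    have h3 := Unitary.mem_iff.1 hw
    rw [Matrix.star_eq_conjTranspose] at h3
    rw [Unitary.mem_iff, Matrix.star_eq_conjTranspose]
    simp [Matrix.fromBlocks_conjTranspose, Matrix.fromBlocks_multiply, h3.1, h3.2]
  have := join_mul (join_mul hj (JoinedIn.refl hwu)) hj
  rw [one_mul, mul_one] at this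
  convert this using 1
  rw [hY, Matrix.fromBlocks_multiply, Matrix.fromBlocks_multiply]
  congr 1 <;> simp [Matrix.mul_sub, Matrix.sub_mul, Matrix.mul_assoc, hR, hR']
  abel

open Matrix in
lemma row_iso {n : ℕ} (V : ℕ → A) (hV1 : ∀ i, star (V i) * V i = 1)
    (hV2 : ∀ i j, i ≠ j → star (V i) * V j = 0) :
    (Matrix.of fun (_ : Fin 1) (j : Fin n) => V j)ᴴ * (Matrix.of fun (_ : Fin 1) (j : Fin n) => V j)
      = 1 := by
  ext i j
  rw [Matrix.mul_apply]
  simp only [Fin.sum_univ_one, Matrix.conjTranspose_apply, Matrix.of_apply, Matrix.one_apply]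
  split_ifs with h
  · rw [h, hV1]
  · exact hV2 _ _ fun h' => h (Fin.ext h')

lemma entry_unitary (x : Matrix (Fin 1) (Fin 1) A) (hx : x ∈ unitary (Matrix (Fin 1) (Fin 1) A)) :
    x 0 0 ∈ unitary A := by
  rw [Unitary.mem_iff] at hx ⊢
  have h1 := congrFun (congrFun hx.1 0) 0
  have h2 := congrFun (congrFun hx.2 0) 0
  simpa [Matrix.mul_apply, Matrix.star_apply] using And.intro h1 h2

open Matrix in
lemma surj_abs (V : ℕ → A) (hV1 : ∀ i, star (V i) * V i = 1)
    (hV2 : ∀ i j, i ≠ j → star (V i) * V j = 0) (n : ℕ)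
    (w : Matrix (Fin (n + 1)) (Fin (n + 1)) A)
    (hw : w ∈ unitary (Matrix (Fin (n + 1)) (Fin (n + 1)) A)) :
    ∃ v ∈ unitary A, ∃ m : ℕ,
        JoinedIn
          (unitary (Matrix (Fin (n + 1) ⊕ Fin m) (Fin (n + 1) ⊕ Fin m) A) :
            Set (Matrix (Fin (n + 1) ⊕ Fin m) (Fin (n + 1) ⊕ Fin m) A))
          (Matrix.fromBlocks (Matrix.diagonal fun i => if i = 0 then v else 1) 0 0
            (1 : Matrix (Fin m) (Fin m) A))
          (Matrix.fromBlocks w 0 0 (1 : Matrix (Fin m) (Fin m) A)) := by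
  have hR := row_iso (n := n + 1) V hV1 hV2
  set R : Matrix (Fin 1) (Fin (n + 1)) A := Matrix.of fun (_ : Fin 1) (j : Fin (n + 1)) => V j
  have hv := conj_unitary R hR w hw
  have hj := join_block R hR w hw
  set v := R * w * Rᴴ + (1 - R * Rᴴ)
  refine ⟨v 0 0, entry_unitary v hv, 1, ?_⟩
  refine JoinedIn.trans ?_ hj
  set E : Matrix (Fin (n + 1)) (Fin 1) A := Matrix.of fun i _ => if i = 0 then 1 else 0 with hE
  have hEE : Eᴴ * E = 1 := by
    ext i j
    fin_cases i; fin_cases j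
    simp [Matrix.mul_apply, hE]
  have := join_block' E hEE v hv
  convert this using 2
  ext i j
  simp only [Matrix.add_apply, Matrix.sub_apply, Matrix.mul_apply, Fin.sum_univ_one,
    Matrix.conjTranspose_apply, hE, Matrix.of_apply, Matrix.diagonal_apply, Matrix.one_apply]
  by_cases hi : i = 0 <;> by_cases h0 : j = 0
  · simp [hi, h0]
  · have h0' : ¬ (0 = j) := fun h => h0 h.symm
    simp [hi, h0, h0']
  · simp [hi, h0]
  · simp [hi, h0]

open Matrix in
lemma inj_abs (V : ℕ → A) (hV1 : ∀ i, star (V i) * V i = 1)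
    (hV2 : ∀ i j, i ≠ j → star (V i) * V j = 0) (u : A) (hu : u ∈ unitary A) (S T : A)
    (hS : star S * S = 1) (hT : star T * T = 1) (hST : star S * T = 0)
    (hSuT : star S * u * T = 0) (n : ℕ)
    (h : JoinedIn (unitary (Matrix (Fin (n + 1)) (Fin (n + 1)) A) : Set (Matrix (Fin (n + 1)) (Fin (n + 1)) A))
        (Matrix.diagonal fun i => if i = 0 then u else 1) 1) :
    JoinedIn (unitary A : Set A) u 1 := by
  have huu := Unitary.mem_iff.1 hu
  obtain ⟨w1, hw1, hw1'⟩ := swap_iso (u * T) S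
    (by rw [star_mul, mul_assoc, ← mul_assoc (star u), huu.1, one_mul, hT]) hS
    (by rw [← star_star S, ← star_mul, ← mul_assoc, hSuT, star_zero])
  obtain ⟨z, hz, hz'⟩ := swap_iso S T hS hT hST
  set x := z * w1 * u with hx
  have hxT : x * T = T := by rw [hx, mul_assoc, mul_assoc, hw1', hz']
  have hxu : JoinedIn (unitary A : Set A) x u := by
    have := join_mul (join_mul hz hw1) (JoinedIn.refl hu)
    rwa [one_mul, one_mul] at this
  clear_value x
  have hxm : x ∈ unitary A := hxu.source_mem
  have hxx := Unitary.mem_iff.1 hxm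
  have hTx : star T * x = star T := by
    have : star x * T = T := by
      nth_rewrite 1 [← hxT]
      rw [← mul_assoc, hxx.1, one_mul]
    rw [← star_star x, ← star_mul, this]
  -- stabilise
  have hdiag : JoinedIn (unitary (Matrix (Fin (n + 1)) (Fin (n + 1)) A) :
      Set (Matrix (Fin (n + 1)) (Fin (n + 1)) A))
      (Matrix.diagonal fun i => if i = 0 then x else 1) 1 := by
    refine JoinedIn.trans ?_ h
    obtain ⟨p, hp⟩ := hxu
    let D : A → Matrix (Fin (n + 1)) (Fin (n + 1)) A := fun y => Matrix.diagonal fun i => if i = 0 then y else 1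
    have hD : Continuous D := by
      refine Continuous.matrix_diagonal (continuous_pi fun i => ?_)
      split_ifs <;> fun_prop
    refine ⟨p.map hD, fun t => ?_⟩
    have h3 := Unitary.mem_iff.1 (hp t)
    change D (p t) ∈ unitary _
    rw [Unitary.mem_iff, Matrix.star_eq_conjTranspose]
    simp only [D, Matrix.diagonal_conjTranspose, Matrix.diagonal_mul_diagonal]
    constructor
    all_goals
      rw [← Matrix.diagonal_one]
      congr 1
      ext i
      by_cases hi : i = 0 <;> simp [hi, h3.1, h3.2]
  -- compress
  have hW1 : ∀ i, star (T * V i) * (T * V i) = 1 := fun i => by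
    rw [star_mul, mul_assoc, ← mul_assoc (star T), hT, one_mul, hV1]
  have hW2 : ∀ i j, i ≠ j → star (T * V i) * (T * V j) = 0 := fun i j hij => by
    rw [star_mul, mul_assoc, ← mul_assoc (star T), hT, one_mul, hV2 i j hij]
  have hR := row_iso (n := n + 1) (fun i => T * V i) hW1 hW2
  set R : Matrix (Fin 1) (Fin (n + 1)) A := Matrix.of fun (_ : Fin 1) (j : Fin (n + 1)) => T * V j with hRdef
  let φ : Matrix (Fin (n + 1)) (Fin (n + 1)) A → A := fun y =>
    (R * y * Rᴴ + (1 - R * Rᴴ) : Matrix (Fin 1) (Fin 1) A) 0 0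
  have hφ : Continuous φ := by
    refine Continuous.matrix_elem ?_ 0 0
    exact ((continuous_const.matrix_mul continuous_id).matrix_mul continuous_const).add continuous_const
  have hj : JoinedIn (unitary A : Set A)
      (T * V 0 * x * star (T * V 0) + (1 - T * V 0 * star (T * V 0))) 1 := by
    obtain ⟨p, hp⟩ := hdiag
    have : JoinedIn (unitary A : Set A) (φ (Matrix.diagonal fun i => if i = 0 then x else 1)) (φ 1) :=
      ⟨p.map hφ, fun t => entry_unitary _ (conj_unitary R hR _ (hp t))⟩
    convert this using 1
    · have e : ∀ D : Fin (n + 1) → A, (R * Matrix.diagonal D * Rᴴ) 0 0 =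
          ∑ j, R 0 j * D j * star (R 0 j) := fun D => by
        rw [Matrix.mul_apply]
        simp only [Matrix.mul_diagonal, Matrix.conjTranspose_apply]
      have e2 : (R * Rᴴ) 0 0 = ∑ j, R 0 j * star (R 0 j) := by
        rw [Matrix.mul_apply]
        simp only [Matrix.conjTranspose_apply]
      simp only [φ, Matrix.add_apply, Matrix.sub_apply, e, e2]
      simp only [hRdef, Matrix.of_apply, Matrix.one_apply, Fin.sum_univ_succ]
      simp
      abel
    · simp [φ]
  set W := T * V 0 with hW
  set q := 1 - T * star T with hq
  have hWW : star W * W = 1 := hW1 0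
  have hqW : q * W = 0 := by
    rw [hq, hW, sub_mul, one_mul, mul_assoc T, ← mul_assoc (star T), hT, one_mul, sub_self]
  have hqs : star q = q := by simp [hq]
  have hqq : q * q = q := by
    rw [hq, mul_sub, mul_one, sub_mul, one_mul, mul_assoc T, ← mul_assoc (star T) T, hT, one_mul]
    simp
  obtain ⟨hY1, hY2⟩ := swap_sa (W * q) q (W * q * star W)
    (by rw [star_mul, hqs, mul_assoc, ← mul_assoc (star W), hWW, one_mul, hqq])
    (by rw [star_mul, hqs, ← mul_assoc, mul_assoc W q q, hqq])
    (by rw [mul_assoc, hqq])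
    (by rw [← mul_assoc, ← mul_assoc, hqW, zero_mul, zero_mul])
  set Y := W * q + star (W * q) + (1 - q - W * q * star W) with hY
  have hWq : star W * q = 0 := by rw [← hqs, ← star_mul, hqW, star_zero]
  have hYq : Y * q = W * q := by
    rw [hY, star_mul, hqs]
    simp only [add_mul, sub_mul, mul_assoc, hqq, hWq, one_mul, mul_zero]
    simp
  have hqY : q * Y = q * star W := by
    rw [← hqs, ← hY1, ← star_mul, hYq, star_mul]
  have hqx : q * (x - 1) = x - 1 := by
    rw [hq, sub_mul, one_mul, mul_assoc, mul_sub, hTx, mul_one, sub_self, mul_zero, sub_zero]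
  have hxq : (x - 1) * q = x - 1 := by
    rw [hq, mul_sub, mul_one, ← mul_assoc, sub_mul x, hxT, one_mul, sub_self, zero_mul, sub_zero]
  have h1 : Y * (x - 1) = W * (x - 1) := by
    rw [← hqx, ← mul_assoc, hYq, mul_assoc]
  have h2 : (x - 1) * Y = (x - 1) * star W := by
    rw [← hxq, mul_assoc, hqY, ← mul_assoc, hxq]
  have hfin : Y * x * Y = W * x * star W + (1 - W * star W) := by
    have : Y * x * Y = Y * (x - 1) * Y + Y * Y := by noncomm_ring
    rw [this, hY2, h1, mul_assoc, h2]
    noncomm_ring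
  have hjY := join_sa Y hY1 hY2
  have := join_mul (join_mul hjY (JoinedIn.refl hxm)) hjY
  rw [one_mul, mul_one, hfin] at this
  exact hxu.symm.trans (this.symm.trans hj)

end

end

/-- Let `B` be a separable stable C*-algebra with corona `C(B)` (encoded
as a surjective `*`-homomorphism `π` onto a unital C*-algebra `Q` with kernel the canonical
ideal `B`), and let `K` be a compact Hausdorff space.  Then `C(K) ⊗ C(B) = C(K, Q)` is
K₁-injective and K₁-surjective: the natural map `U/U₀ → K₁` is a bijection.

K₁ is encoded concretely: the K₁-class of a unitary `u` vanishes iff some stabilization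
`u ⊕ 1ₙ` lies in the connected component of `1` in the unitaries of the matrix algebra,
and two unitaries have the same K₁-class iff they are joined after stabilization.
K₁-injectivity says a unitary of `C(K, Q)` whose class vanishes lies in `U₀`;
K₁-surjectivity says every unitary matrix class is, after stabilization, represented by a
unitary of `C(K, Q)`. -/
theorem stmt18 {B Q : Type*} [NonUnitalCStarAlgebra B] [TopologicalSpace.SeparableSpace B]
    [CStarAlgebra Q] (hstable : IsStable B)
    (π : 𝓜(ℂ, B) →⋆ₐ[ℂ] Q) (hπ : Function.Surjective π)
    (hker : ∀ m : 𝓜(ℂ, B), π m = 0 ↔ inCanonicalIdeal m)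
    (K : Type*) [TopologicalSpace K] [CompactSpace K] [T2Space K] :
    (∀ u ∈ unitary C(K, Q),
      (∃ n : ℕ, JoinedIn (unitary (Matrix (Fin (n + 1)) (Fin (n + 1)) C(K, Q)) : Set (Matrix (Fin (n + 1)) (Fin (n + 1)) C(K, Q)))
        (Matrix.diagonal fun i => if i = 0 then u else 1) 1) →
      JoinedIn (unitary C(K, Q) : Set C(K, Q)) u 1) ∧
    (∀ n : ℕ, ∀ w ∈ unitary (Matrix (Fin (n + 1)) (Fin (n + 1)) C(K, Q)),
      ∃ v ∈ unitary C(K, Q), ∃ m : ℕ,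
        JoinedIn
          (unitary (Matrix (Fin (n + 1) ⊕ Fin m) (Fin (n + 1) ⊕ Fin m) C(K, Q)) :
            Set (Matrix (Fin (n + 1) ⊕ Fin m) (Fin (n + 1) ⊕ Fin m) C(K, Q)))
          (Matrix.fromBlocks (Matrix.diagonal fun i => if i = 0 then v else 1) 0 0
            (1 : Matrix (Fin m) (Fin m) C(K, Q)))
          (Matrix.fromBlocks w 0 0 (1 : Matrix (Fin m) (Fin m) C(K, Q)))) := by
  obtain ⟨s, hs1, hs2, hs⟩ := hstable
  have hV1 : ∀ i, star (ContinuousMap.const K (π (s i))) * ContinuousMap.const K (π (s i)) = 1 := by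
    intro i
    ext k
    simp only [ContinuousMap.mul_apply, ContinuousMap.star_apply, ContinuousMap.const_apply,
      ContinuousMap.one_apply, ← map_star, ← map_mul, hs1, map_one]
  have hV2 : ∀ i j, i ≠ j →
      star (ContinuousMap.const K (π (s i))) * ContinuousMap.const K (π (s j)) = 0 := by
    intro i j hij
    ext k
    simp only [ContinuousMap.mul_apply, ContinuousMap.star_apply, ContinuousMap.const_apply,
      ContinuousMap.zero_apply, ← map_star, ← map_mul, hs2 i j hij, map_zero]
  refine ⟨?_, fun n w hw => surj_abs (fun i => ContinuousMap.const K (π (s i))) hV1 hV2 n w hw⟩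
  rintro u hu ⟨n, hn⟩
  obtain ⟨c, hc, hcu⟩ := (isCompact_range u.continuous).isSeparable
  obtain ⟨f, hf⟩ := (hc.insert 0).exists_eq_range (Set.insert_nonempty 0 c)
  choose X hX using fun j => hπ (f j)
  obtain ⟨d, hds, hd1, hd⟩ := aux_approx (B := B)
  have hcoe : ∀ b : B, π (b : 𝓜(ℂ, B)) = 0 := fun b => (hker _).2 ⟨b, rfl⟩
  have hsum : ∀ N, ∑ n ∈ Finset.range N, (d n : 𝓜(ℂ, B)) * (d n : 𝓜(ℂ, B)) =
      DoubleCentralizer.coeHom (𝕜 := ℂ) (∑ n ∈ Finset.range N, d n * d n) := by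
    intro N
    simp only [map_sum, map_mul]
    rfl
  obtain ⟨S, T, hS, hT, hST, hX0⟩ := core_two (M := 𝓜(ℂ, B)) π
    (by
      intro T h1 h2
      obtain ⟨t, ht⟩ := aux_complete T (fun b => h1 _ (hcoe b)) (fun b => h2 _ (hcoe b))
      refine ⟨t, fun b hb => ?_⟩
      obtain ⟨b', rfl⟩ := (hker b).1 hb
      exact ht b')
    (fun x h => aux_ess x fun a b => h _ _ (hcoe a) (hcoe b))
    (fun n => (d n : 𝓜(ℂ, B))) (fun n => hcoe _)
    (fun n => by
      have := (map_star (DoubleCentralizer.coeHom (𝕜 := ℂ) (A := B)) (d n)).symm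
      rw [hds] at this
      exact this)
    (fun N => by
      rw [hsum, aux_iso.norm_map_of_map_zero (map_zero _)]
      exact hd1 N)
    (by
      intro b hb
      obtain ⟨b', rfl⟩ := (hker b).1 hb
      have h1 := (aux_iso (B := B)).continuous.tendsto b' |>.comp (hd b')
      refine h1.congr fun N => ?_
      rw [hsum, Function.comp_apply, map_mul]
      rfl)
    s hs1 hs2
    (by
      intro b hb
      obtain ⟨b', rfl⟩ := (hker b).1 hb
      exact hs b')
    X
  refine inj_abs (fun i => ContinuousMap.const K (π (s i))) hV1 hV2 u hu
    (ContinuousMap.const K (π S)) (ContinuousMap.const K (π T)) ?_ ?_ ?_ ?_ n hn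
  · ext k
    simp only [ContinuousMap.mul_apply, ContinuousMap.star_apply, ContinuousMap.const_apply,
      ContinuousMap.one_apply, ← map_star, ← map_mul, hS, map_one]
  · ext k
    simp only [ContinuousMap.mul_apply, ContinuousMap.star_apply, ContinuousMap.const_apply,
      ContinuousMap.one_apply, ← map_star, ← map_mul, hT, map_one]
  · ext k
    simp only [ContinuousMap.mul_apply, ContinuousMap.star_apply, ContinuousMap.const_apply,
      ContinuousMap.zero_apply, ← map_star, ← map_mul, hST, map_zero]
  · ext k
    simp only [ContinuousMap.mul_apply, ContinuousMap.star_apply, ContinuousMap.const_apply,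
      ContinuousMap.zero_apply]
    have hcl : IsClosed {y : Q | star (π S) * y * π T = 0} :=
      isClosed_eq (by fun_prop) continuous_const
    have hsub : c ⊆ {y : Q | star (π S) * y * π T = 0} := by
      intro y hy
      obtain ⟨j, rfl⟩ : y ∈ Set.range f := hf ▸ Set.mem_insert_of_mem _ hy
      have := hX0 j
      rw [map_mul, map_mul, map_star, hX] at this
      exact this
    exact closure_minimal hsub hcl (hcu ⟨k, rfl⟩)
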